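/- Let R be a commutative ring containing ℚ, A = R[X,Y] a polynomial ring in two variables over R, and D a fixed point free locally nilpotent R-derivation of A. Then A is a polynomial ring in one variable over Ker(D), and Ker(D) is a polynomial ring in one variable over R. -/

import Mathlib

/-!
Over an algebraically closed field of characteristic zero, let `f` be a nonscalar constant of `D` of
minimal degree. Every `f - c` is then prime, and since `D` has no fixed points it induces a nonzero
derivation of each curve `f = c`, whose constants are therefore scalars. Repeated division by the
`f - c` shows that `Ker D = k[f]`, and turns any `r` with `D r ∈ k[f] ∖ {0}` into a slice, that is,
an `s` with `D s = 1`.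

Over a reduced ring this forces the divergence of `D` to vanish, so `D` is the Jacobian derivation
`∂(p, ·)/∂(X, Y)` of some `p`. If the ring is Noetherian, exactness of
`0 → R[T] → R[X, Y] → R[X, Y] → 0`, with `T ↦ p` followed by `∂(p, ·)/∂(X, Y)`, can be tested on
residue fields by dévissage, and there after passing to an algebraic closure; it says that
`Ker D = R[p]` and that `D` has a slice. By Nakayama's lemma a coordinate pair consisting of a
constant and a slice lifts along a nilpotent ideal, and an arbitrary `R` reduces to a finitely
generated `ℚ`-subalgebra containing the coefficients of `D`.
-/

namespace LND

open scoped Polynomial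

section Derivations

open Polynomial Finset

variable {B C : Type*} [CommRing B] [CommRing C] [Algebra B C] {D : Derivation B C C}

/-- A locally nilpotent derivation: each element is annihilated by some power of `D`. -/
def IsLocallyNilpotent (D : Derivation B C C) : Prop :=
  ∀ a, ∃ n, D^[n] a = 0

/-- A fixed point free derivation: the image of `D` generates the unit ideal. -/
def IsFixedPointFree (D : Derivation B C C) : Prop :=
  Ideal.span (Set.range D) = ⊤

/-- The ring of constants of a derivation. -/
def kernel (D : Derivation B C C) : Subalgebra B C where
  carrier := {a | D a = 0}
  mul_mem' {a b} ha hb := by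
    change D a = 0 at ha
    change D b = 0 at hb
    simp [ha, hb]
  add_mem' {a b} ha hb := by
    change D a = 0 at ha
    change D b = 0 at hb
    simp [ha, hb]
  algebraMap_mem' r := D.map_algebraMap r

theorem mem_kernel {a : C} : a ∈ kernel D ↔ D a = 0 := Iff.rfl

/-- A derivation is linear over its own ring of constants; this is the scalar extension that
records it. -/
def overKernel (D : Derivation B C C) : Derivation (kernel D) C C :=
  Derivation.mk'
    { toFun := D
      map_add' := D.map_add
      map_smul' := fun c x => by
        simp [Subalgebra.smul_def, mem_kernel.mp c.2] }
    D.leibniz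

theorem derivation_aeval_kernel (s : C) (P : (kernel D)[X]) :
    D (aeval s P) = aeval s (derivative P) * D s :=
  (overKernel D).map_aeval P s

theorem IsFixedPointFree.ne_zero [Nontrivial C] (hD : IsFixedPointFree D) : D ≠ 0 := by
  rintro rfl
  rw [IsFixedPointFree, Ideal.eq_top_iff_one] at hD
  have hle : Ideal.span (Set.range (0 : Derivation B C C)) ≤ ⊥ :=
    Ideal.span_le.mpr (by rintro _ ⟨a, rfl⟩; rfl)
  exact one_ne_zero (hle hD)

theorem derivation_mem_of_adjoin_eq_top {t : Set C} (ht : Algebra.adjoin B t = ⊤)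
    {I : Ideal C} (h : ∀ x ∈ t, D x ∈ I) (a : C) : D a ∈ I := by
  induction ht ▸ Algebra.mem_top (x := a) using Algebra.adjoin_induction with
  | mem x hx => exact h x hx
  | algebraMap r => rw [D.map_algebraMap]; exact I.zero_mem
  | add x y _ _ hx hy => rw [map_add]; exact I.add_mem hx hy
  | mul x y _ _ hx hy => rw [D.leibniz]; exact I.add_mem (I.mul_mem_left x hy) (I.mul_mem_left y hx)

theorem derivation_iterate_mul (D : Derivation B C C) (n : ℕ) (a b : C) :
    D^[n] (a * b) = ∑ ij ∈ antidiagonal n, n.choose ij.1 • (D^[ij.1] a * D^[ij.2] b) := by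
  induction n with
  | zero => simp
  | succ n ih =>
    rw [sum_antidiagonal_choose_succ_nsmul fun i j => D^[i] a * D^[j] b,
      Function.iterate_succ_apply', ih, map_sum, ← sum_add_distrib]
    refine sum_congr rfl fun ij hij => ?_
    rw [map_nsmul, D.leibniz, nsmul_add,
      Nat.choose_symm_of_eq_add (HasAntidiagonal.mem_antidiagonal.mp hij).symm,
      Function.iterate_succ_apply', Function.iterate_succ_apply', smul_eq_mul, smul_eq_mul,
      mul_comm (D^[ij.2] b)]

theorem derivation_iterate_eq_zero_of_le {n m : ℕ} (h : n ≤ m) {a : C} (ha : D^[n] a = 0) :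
    D^[m] a = 0 := by
  rw [← Nat.sub_add_cancel h, Function.iterate_add_apply, ha, iterate_map_zero]

theorem IsLocallyNilpotent.of_adjoin_eq_top {t : Set C} (ht : Algebra.adjoin B t = ⊤)
    (h : ∀ x ∈ t, ∃ n, D^[n] x = 0) : IsLocallyNilpotent D := fun a => by
  induction ht ▸ Algebra.mem_top (x := a) using Algebra.adjoin_induction with
  | mem x hx => exact h x hx
  | algebraMap r => exact ⟨1, D.map_algebraMap r⟩
  | add x y _ _ hx hy =>
    obtain ⟨n, hn⟩ := hx
    obtain ⟨m, hm⟩ := hy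
    exact ⟨max n m, by
      rw [iterate_map_add, derivation_iterate_eq_zero_of_le (le_max_left n m) hn,
        derivation_iterate_eq_zero_of_le (le_max_right n m) hm, add_zero]⟩
  | mul x y _ _ hx hy =>
    obtain ⟨n, hn⟩ := hx
    obtain ⟨m, hm⟩ := hy
    refine ⟨n + m, ?_⟩
    rw [derivation_iterate_mul]
    refine sum_eq_zero fun ij hij => ?_
    rw [HasAntidiagonal.mem_antidiagonal] at hij
    obtain h | h : n ≤ ij.1 ∨ m ≤ ij.2 := by omega
    · rw [derivation_iterate_eq_zero_of_le h hn, zero_mul, smul_zero]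
    · rw [derivation_iterate_eq_zero_of_le h hm, mul_zero, smul_zero]

theorem IsLocallyNilpotent.exists_last_iterate (hD : IsLocallyNilpotent D) {a : C} (ha : a ≠ 0) :
    ∃ n, D^[n] a ≠ 0 ∧ D^[n + 1] a = 0 := by
  classical
  have hpos : Nat.find (hD a) ≠ 0 := fun h => ha (by simpa [h] using Nat.find_spec (hD a))
  refine ⟨Nat.find (hD a) - 1, Nat.find_min (hD a) (by omega), ?_⟩
  rw [Nat.sub_add_cancel (Nat.one_le_iff_ne_zero.mpr hpos)]
  exact Nat.find_spec (hD a)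

theorem IsLocallyNilpotent.exists_local_slice (hD : IsLocallyNilpotent D) (hD0 : D ≠ 0) :
    ∃ r, D r ≠ 0 ∧ D (D r) = 0 := by
  obtain ⟨b, hb⟩ := DFunLike.ne_iff.mp hD0
  obtain ⟨n, hn, hn'⟩ := hD.exists_last_iterate hb
  rw [← Function.iterate_succ_apply, Function.iterate_succ_apply'] at hn hn'
  exact ⟨D^[n] b, hn, by rwa [Function.iterate_succ_apply'] at hn'⟩

theorem IsLocallyNilpotent.eq_zero_of_mul [IsDomain C] [CharZero C] (hD : IsLocallyNilpotent D)
    {a b : C} (hab : a * b ≠ 0) (h : D (a * b) = 0) : D a = 0 := by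
  obtain ⟨n, hn, hn'⟩ := hD.exists_last_iterate (left_ne_zero_of_mul hab)
  obtain ⟨m, hm, hm'⟩ := hD.exists_last_iterate (right_ne_zero_of_mul hab)
  have top_term : D^[n + m] (a * b) = (n + m).choose n • (D^[n] a * D^[m] b) := by
    rw [derivation_iterate_mul]
    refine sum_eq_single_of_mem (n, m) (HasAntidiagonal.mem_antidiagonal.mpr rfl) fun ij hij hne =>
      ?_
    rw [HasAntidiagonal.mem_antidiagonal] at hij
    obtain h | h : n + 1 ≤ ij.1 ∨ m + 1 ≤ ij.2 := by
      by_contra! hlt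
      exact hne (Prod.ext (by omega) (by omega))
    · rw [derivation_iterate_eq_zero_of_le h hn', zero_mul, smul_zero]
    · rw [derivation_iterate_eq_zero_of_le h hm', mul_zero, smul_zero]
  have top_ne : D^[n + m] (a * b) ≠ 0 := by
    rw [top_term]
    exact smul_ne_zero (Nat.choose_pos (Nat.le_add_right n m)).ne' (mul_ne_zero hn hm)
  have hzero : n + m = 0 := by
    by_contra hpos
    exact top_ne (derivation_iterate_eq_zero_of_le (n := 1) (by omega) h)
  obtain rfl : n = 0 := by omega
  exact hn'

/-- If the relations of `x` are closed under differentiation, then `x` has no relation at all,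
since differentiating a relation often enough produces a nonzero constant. -/
theorem aeval_injective_of_derivative [IsAddTorsionFree B] [FaithfulSMul B C] {x : C}
    (h : ∀ P : B[X], aeval x P = 0 → aeval x (derivative P) = 0) :
    Function.Injective (aeval x : B[X] →ₐ[B] C) := by
  rw [injective_iff_map_eq_zero]
  intro P
  induction hn : P.natDegree using Nat.strong_induction_on generalizing P with
  | _ n ih =>
    intro hP
    have hder : derivative P = 0 := by
      by_cases hn0 : n = 0
      · rw [eq_C_of_natDegree_eq_zero (hn.trans hn0), derivative_C]
      · exact ih _ (hn ▸ natDegree_derivative_lt (hn ▸ hn0)) _ rfl (h P hP)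
    rw [eq_C_of_derivative_eq_zero hder, aeval_C,
      FaithfulSMul.algebraMap_eq_zero_iff] at hP
    rw [eq_C_of_derivative_eq_zero hder, hP, C_0]

theorem eq_zero_of_isAlgebraic_kernel [IsDomain C] [CharZero C] {b : C}
    (hb : IsAlgebraic (kernel D) b) : D b = 0 := by
  by_contra hDb
  refine (transcendental_iff_injective.mpr (aeval_injective_of_derivative fun P hP => ?_)) hb
  have := derivation_aeval_kernel b P
  rw [hP, map_zero] at this
  exact (mul_eq_zero.mp this.symm).resolve_right hDb

section Slice

variable [Algebra ℚ B] {s : C}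

/-- Integration by parts: `sᵏ y` is the derivative of `(sᵏ⁺¹ y - ∫ sᵏ⁺¹ D y) / (k + 1)`. -/
theorem exists_primitive_pow_mul (hs : D s = 1) (S : Subalgebra B C) (hsS : s ∈ S)
    (hS : ∀ x ∈ S, D x ∈ S) (n : ℕ) :
    ∀ y ∈ S, D^[n] y = 0 → ∀ k : ℕ, ∃ w ∈ S, D w = s ^ k * y := by
  induction n with
  | zero => rintro y - rfl k; exact ⟨0, zero_mem S, by simp⟩
  | succ n ih =>
    intro y hy hn k
    obtain ⟨w, hw, hDw⟩ := ih (D y) (hS y hy) hn (k + 1)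
    refine ⟨algebraMap ℚ B (k + 1)⁻¹ • (s ^ (k + 1) * y - w),
      S.smul_mem (S.sub_mem (S.mul_mem (S.pow_mem hsS _) hy) hw) _, ?_⟩
    have hD : D (s ^ (k + 1) * y - w) = algebraMap ℚ B (k + 1) • (s ^ k * y) := by
      simp only [map_sub, D.leibniz, D.leibniz_pow, hs, hDw, smul_eq_mul,
        ← Nat.cast_smul_eq_nsmul B, Algebra.smul_def, map_add, map_natCast, map_one,
        Nat.add_sub_cancel]
      push_cast
      ring
    rw [D.map_smul, hD, smul_smul, ← map_mul, inv_mul_cancel₀ (by positivity), map_one, one_smul]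

theorem exists_primitive (hs : D s = 1) (S : Subalgebra B C) (hsS : s ∈ S)
    (hS : ∀ x ∈ S, D x ∈ S) (hD : IsLocallyNilpotent D) {y : C} (hy : y ∈ S) :
    ∃ w ∈ S, D w = y := by
  obtain ⟨n, hn⟩ := hD y
  simpa using exists_primitive_pow_mul hs S hsS hS n y hy hn 0

theorem IsLocallyNilpotent.surjective_of_slice (hD : IsLocallyNilpotent D) (hs : D s = 1) :
    Function.Surjective D := fun y =>
  let ⟨w, _, hw⟩ := exists_primitive hs ⊤ trivial (fun _ _ => trivial) hD (y := y) trivial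
  ⟨w, hw⟩

theorem IsLocallyNilpotent.adjoin_slice_eq_top (hD : IsLocallyNilpotent D) (hs : D s = 1) :
    Algebra.adjoin (kernel D) {s} = ⊤ := by
  let S := (Algebra.adjoin (kernel D) {s}).restrictScalars B
  have hsS : s ∈ S := Algebra.subset_adjoin (R := kernel D) (Set.mem_singleton s)
  have hS : ∀ x ∈ S, D x ∈ S := by
    intro x hx
    obtain ⟨P, rfl⟩ := (Algebra.adjoin_singleton_eq_range_aeval (kernel D) s).le hx
    change D (aeval s P) ∈ S
    rw [derivation_aeval_kernel, hs, mul_one]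
    exact aeval_mem_adjoin_singleton (kernel D) s
  have hmem : ∀ n a, D^[n] a = 0 → a ∈ S := by
    intro n
    induction n with
    | zero => rintro a rfl; exact zero_mem S
    | succ n ih =>
      intro a ha
      obtain ⟨w, hwS, hw⟩ := exists_primitive hs S hsS hS hD (ih (D a) ha)
      have hconst : a - w ∈ kernel D := by rw [mem_kernel, map_sub, hw, sub_self]
      rw [← sub_add_cancel a w]
      exact S.add_mem ((Algebra.adjoin (kernel D) {s}).algebraMap_mem ⟨a - w, hconst⟩) hwS
  exact Algebra.eq_top_iff.mpr fun a => let ⟨n, hn⟩ := hD a; hmem n a hn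

theorem aeval_slice_injective (hs : D s = 1) :
    Function.Injective (aeval s : (kernel D)[X] →ₐ[kernel D] C) := by
  let := Algebra.compHom (kernel D) (algebraMap ℚ B)
  have := IsAddTorsionFree.of_module_rat (kernel D)
  refine aeval_injective_of_derivative fun P hP => ?_
  rw [← mul_one (aeval s (derivative P)), ← hs, ← derivation_aeval_kernel, hP, map_zero]

theorem IsLocallyNilpotent.aeval_slice_bijective (hD : IsLocallyNilpotent D) (hs : D s = 1) :
    Function.Bijective (aeval s : (kernel D)[X] →ₐ[kernel D] C) :=
  ⟨aeval_slice_injective hs, by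
    rw [← AlgHom.range_eq_top, ← Algebra.adjoin_singleton_eq_range_aeval]
    exact hD.adjoin_slice_eq_top hs⟩

theorem eq_kernel_of_adjoin_slice_eq_top (hs : D s = 1) {S : Subalgebra B C} (hS : S ≤ kernel D)
    (htop : Algebra.adjoin S {s} = ⊤) : S = kernel D := by
  refine le_antisymm hS fun c hc => ?_
  obtain ⟨P, hP⟩ := (Algebra.adjoin_singleton_eq_range_aeval S s).le
    (htop ▸ Algebra.mem_top (x := c))
  have hPc : P.map (Subalgebra.inclusion hS).toRingHom = Polynomial.C ⟨c, hc⟩ := by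
    apply aeval_slice_injective hs
    rw [aeval_C]
    refine Eq.trans ?_ hP
    change eval₂ _ _ _ = eval₂ _ _ _
    rw [eval₂_map]
    rfl
  have hcoeff := congrArg (fun Q => ((Q.coeff 0 : kernel D) : C)) hPc
  simp only [coeff_map, coeff_C_zero] at hcoeff
  exact hcoeff ▸ (P.coeff 0).2

end Slice

end Derivations

section Straightening

open Polynomial

variable {B C : Type*} [CommRing B] [CommRing C] [Algebra B C] {D : Derivation B C C} {f s : C}

/-- `D` is the partial derivative `∂/∂s` with respect to generators `f`, `s` of the algebra. -/
structure Straightens (D : Derivation B C C) (f s : C) : Prop where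
  map_constant : D f = 0
  map_slice : D s = 1
  adjoin_eq_top : Algebra.adjoin B {f, s} = ⊤

theorem adjoin_pair_eq_adjoin_adjoin (f s : C) : Algebra.adjoin B {f, s} =
    (Algebra.adjoin (Algebra.adjoin B {f}) {s}).restrictScalars B := by
  rw [Set.insert_eq, Algebra.adjoin_union_eq_adjoin_adjoin]

variable [Algebra ℚ B]

theorem Straightens.kernel_eq (h : Straightens D f s) : kernel D = Algebra.adjoin B {f} := by
  refine (eq_kernel_of_adjoin_slice_eq_top h.map_slice
    (Algebra.adjoin_le (Set.singleton_subset_iff.mpr h.map_constant)) ?_).symm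
  apply Subalgebra.restrictScalars_injective B
  rw [← adjoin_pair_eq_adjoin_adjoin, h.adjoin_eq_top, Subalgebra.restrictScalars_top]

theorem IsLocallyNilpotent.straightens (hD : IsLocallyNilpotent D) (hs : D s = 1)
    (hf : kernel D = Algebra.adjoin B {f}) : Straightens D f s where
  map_constant := hf.ge (Algebra.self_mem_adjoin_singleton B f)
  map_slice := hs
  adjoin_eq_top := by
    have h : ∀ S, kernel D = S → (Algebra.adjoin S {s}).restrictScalars B = ⊤ := by
      rintro _ rfl
      rw [hD.adjoin_slice_eq_top hs, Subalgebra.restrictScalars_top]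
    exact (adjoin_pair_eq_adjoin_adjoin f s).trans (h _ hf)

theorem aeval_injective_of_isUnit [FaithfulSMul B C] (E : Derivation B C C) (h : IsUnit (E f)) :
    Function.Injective (aeval f : B[X] →ₐ[B] C) := by
  have := IsAddTorsionFree.of_module_rat B
  refine aeval_injective_of_derivative fun P hP => ?_
  rw [← h.mul_left_eq_zero, ← smul_eq_mul, ← E.map_aeval, hP, map_zero]

end Straightening

section BaseChange

open MvPolynomial

variable {σ R : Type*} (S : Type*) [CommRing R] [CommRing S] [Algebra R S]
  {D : Derivation R (MvPolynomial σ R) (MvPolynomial σ R)}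

/-- The `S`-linear derivation of `S[X]` whose values on the variables are those of `D`. -/
noncomputable def baseChange (D : Derivation R (MvPolynomial σ R) (MvPolynomial σ R)) :
    Derivation S (MvPolynomial σ S) (MvPolynomial σ S) :=
  mkDerivation S fun i => map (algebraMap R S) (D (X i))

theorem baseChange_X (i : σ) : baseChange S D (X i) = map (algebraMap R S) (D (X i)) :=
  mkDerivation_X _ _ i

theorem baseChange_map (a : MvPolynomial σ R) :
    baseChange S D (map (algebraMap R S) a) = map (algebraMap R S) (D a) := by
  induction a using MvPolynomial.induction_on with
  | C r => simp [derivation_C]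
  | add p q hp hq => simp only [map_add, hp, hq]
  | mul_X p i hp =>
    simp only [map_mul, Derivation.leibniz, hp, map_X, baseChange_X, map_add, smul_eq_mul]

theorem baseChange_iterate_map (n : ℕ) (a : MvPolynomial σ R) :
    (baseChange S D)^[n] (map (algebraMap R S) a) = map (algebraMap R S) (D^[n] a) :=
  ((Function.Semiconj.iterate_right fun a => (baseChange_map S a).symm) n a).symm

theorem isLocallyNilpotent_of_X {D : Derivation R (MvPolynomial σ R) (MvPolynomial σ R)}
    (h : ∀ i, ∃ n, D^[n] (X i) = 0) : IsLocallyNilpotent D :=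
  .of_adjoin_eq_top adjoin_range_X (Set.forall_mem_range.mpr h)

theorem isFixedPointFree_iff_exists_sum [Fintype σ] :
    IsFixedPointFree D ↔ ∃ c : σ → MvPolynomial σ R, ∑ i, c i * D (X i) = 1 := by
  rw [← Ideal.mem_span_range_iff_exists_fun, ← Ideal.eq_top_iff_one, IsFixedPointFree]
  suffices h : Ideal.span (Set.range D) = Ideal.span (Set.range fun i => D (X i)) by rw [h]
  refine le_antisymm (Ideal.span_le.mpr ?_) (Ideal.span_mono (Set.range_comp_subset_range X D))
  rintro _ ⟨a, rfl⟩
  refine derivation_mem_of_adjoin_eq_top adjoin_range_X (Set.forall_mem_range.mpr fun i => ?_) a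
  exact Ideal.subset_span ⟨i, rfl⟩

theorem IsLocallyNilpotent.baseChange (hD : IsLocallyNilpotent D) :
    IsLocallyNilpotent (baseChange S D) :=
  isLocallyNilpotent_of_X fun i => (hD (X i)).imp fun n hn => by
    rw [← map_X (algebraMap R S), baseChange_iterate_map, hn, map_zero]

theorem IsFixedPointFree.baseChange (hD : IsFixedPointFree D) :
    IsFixedPointFree (baseChange S D) := by
  rw [IsFixedPointFree, eq_top_iff, ← Ideal.map_top (map (algebraMap R S)), ← hD, Ideal.map_span]
  refine Ideal.span_mono ?_
  rintro _ ⟨_, ⟨a, rfl⟩, rfl⟩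
  exact ⟨_, baseChange_map S a⟩

theorem Straightens.baseChange {f s : MvPolynomial σ R} (h : Straightens D f s) :
    Straightens (baseChange S D) (map (algebraMap R S) f) (map (algebraMap R S) s) where
  map_constant := by rw [baseChange_map, h.map_constant, map_zero]
  map_slice := by rw [baseChange_map, h.map_slice, map_one]
  adjoin_eq_top := by
    let φ := mapAlgHom (σ := σ) (Algebra.ofId R S)
    let T := Algebra.adjoin S {map (algebraMap R S) f, map (algebraMap R S) s}
    have hφ : ∀ a, φ a ∈ T := fun a => by
      have ha : a ∈ (T.restrictScalars R).comap φ := by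
        refine Algebra.adjoin_le (S := (T.restrictScalars R).comap φ) ?_
          (h.adjoin_eq_top ▸ Algebra.mem_top)
        rintro _ (rfl | rfl)
        exacts [Algebra.subset_adjoin (Set.mem_insert _ _),
          Algebra.subset_adjoin (Set.mem_insert_of_mem _ rfl)]
      exact ha
    rw [← top_le_iff, ← adjoin_range_X, Algebra.adjoin_le_iff]
    rintro _ ⟨i, rfl⟩
    simpa [φ] using hφ (X i)

end BaseChange

section Plane

open MvPolynomial

variable {R : Type*} [CommRing R]

theorem pderiv_comm {σ : Type*} (i j : σ) (a : MvPolynomial σ R) :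
    pderiv i (pderiv j a) = pderiv j (pderiv i a) := by
  classical
  have h : ⁅pderiv (R := R) i, pderiv j⁆ = 0 := derivation_ext fun l => by
    rw [Derivation.commutator_apply, pderiv_X, pderiv_X, Pi.single_apply, Pi.single_apply]
    split_ifs <;> simp
  rw [← sub_eq_zero, ← Derivation.commutator_apply, h, Derivation.zero_apply]

theorem isLocallyNilpotent_pderiv {σ : Type*} (i : σ) :
    IsLocallyNilpotent (pderiv (R := R) i) :=
  isLocallyNilpotent_of_X fun j => ⟨2, by
    classical
    by_cases h : i = j <;> simp [pderiv_X, h]⟩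

/-- The Hamiltonian derivation `a ↦ ∂(p, a)/∂(X, Y)` of `R[X, Y]`. -/
noncomputable def jacobian (p : MvPolynomial (Fin 2) R) :
    Derivation R (MvPolynomial (Fin 2) R) (MvPolynomial (Fin 2) R) :=
  pderiv 0 p • pderiv 1 - pderiv 1 p • pderiv 0

theorem jacobian_apply (p a : MvPolynomial (Fin 2) R) :
    jacobian p a = pderiv 0 p * pderiv 1 a - pderiv 1 p * pderiv 0 a := rfl

theorem jacobian_antisymm (p a : MvPolynomial (Fin 2) R) : jacobian p a = -jacobian a p := by
  rw [jacobian_apply, jacobian_apply]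
  ring

theorem jacobian_self (p : MvPolynomial (Fin 2) R) : jacobian p p = 0 := by
  rw [jacobian_apply, mul_comm, sub_self]

theorem jacobian_X_zero (p : MvPolynomial (Fin 2) R) : jacobian p (X 0) = -pderiv 1 p := by
  simp [jacobian_apply]

theorem jacobian_X_one (p : MvPolynomial (Fin 2) R) : jacobian p (X 1) = pderiv 0 p := by
  simp [jacobian_apply]

theorem baseChange_jacobian (S : Type*) [CommRing S] [Algebra R S] (p : MvPolynomial (Fin 2) R) :
    baseChange S (jacobian p) = jacobian (map (algebraMap R S) p) :=
  derivation_ext fun i => by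
    fin_cases i <;> simp [baseChange_X, jacobian_X_zero, jacobian_X_one, pderiv_map]

theorem isUnit_jacobian_of_adjoin_eq_top {f s : MvPolynomial (Fin 2) R}
    (h : Algebra.adjoin R {f, s} = ⊤) : IsUnit (jacobian f s) := by
  let J := Ideal.span {jacobian f s}
  have hJ : jacobian f s ∈ J := Ideal.mem_span_singleton_self _
  have mem_of_pair (p) (hf : jacobian p f ∈ J) (hs : jacobian p s ∈ J) (a) : jacobian p a ∈ J :=
    derivation_mem_of_adjoin_eq_top h (by rintro _ (rfl | rfl) <;> assumption) a
  have hf : jacobian (X 0) f ∈ J := by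
    rw [jacobian_antisymm]
    exact J.neg_mem (mem_of_pair f (by simp [jacobian_self]) hJ _)
  have hs : jacobian (X 0) s ∈ J := by
    rw [jacobian_antisymm]
    refine J.neg_mem (mem_of_pair s ?_ (by simp [jacobian_self]) _)
    rw [jacobian_antisymm]
    exact J.neg_mem hJ
  have h1 := mem_of_pair (X 0) hf hs (X 1)
  rw [jacobian_X_one, pderiv_X_self] at h1
  exact isUnit_of_dvd_one (Ideal.mem_span_singleton.mp h1)

section Straightens

variable {D : Derivation R (MvPolynomial (Fin 2) R) (MvPolynomial (Fin 2) R)}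
  {f s : MvPolynomial (Fin 2) R}

theorem Straightens.jacobian_eq_smul (h : Straightens D f s) : jacobian f = jacobian f s • D :=
  Derivation.ext_of_adjoin_eq_top _ h.adjoin_eq_top <| by
    rintro _ (rfl | rfl) <;>
      simp [h.map_constant, h.map_slice, jacobian_self]

theorem Straightens.aeval_injective [Algebra ℚ R] (h : Straightens D f s) :
    Function.Injective (Polynomial.aeval f : R[X] →ₐ[R] MvPolynomial (Fin 2) R) := by
  refine aeval_injective_of_isUnit (jacobian s) ?_
  rw [jacobian_antisymm, IsUnit.neg_iff]
  exact isUnit_jacobian_of_adjoin_eq_top h.adjoin_eq_top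

end Straightens

/-- The divergence `∑ ∂ᵢ (D Xᵢ)` of a derivation regarded as a polynomial vector field. -/
noncomputable def divergence {σ : Type*} [Fintype σ]
    (D : Derivation R (MvPolynomial σ R) (MvPolynomial σ R)) : MvPolynomial σ R :=
  ∑ i, pderiv i (D (X i))

theorem divergence_baseChange {σ : Type*} [Fintype σ] (S : Type*) [CommRing S] [Algebra R S]
    (D : Derivation R (MvPolynomial σ R) (MvPolynomial σ R)) :
    divergence (baseChange S D) = map (algebraMap R S) (divergence D) := by
  simp only [divergence, baseChange_X, pderiv_map, map_sum]

theorem divergence_C_smul {σ : Type*} [Fintype σ] (c : R)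
    (D : Derivation R (MvPolynomial σ R) (MvPolynomial σ R)) :
    divergence ((C c : MvPolynomial σ R) • D) = C c * divergence D := by
  simp only [divergence, Derivation.smul_apply, smul_eq_mul, pderiv_C_mul, Finset.mul_sum]

theorem divergence_jacobian (p : MvPolynomial (Fin 2) R) : divergence (jacobian p) = 0 := by
  rw [divergence, Fin.sum_univ_two, jacobian_X_zero, jacobian_X_one, map_neg, pderiv_comm,
    neg_add_cancel]

/-- The Poincaré lemma in the plane. -/
theorem exists_eq_jacobian [Algebra ℚ R]
    {D : Derivation R (MvPolynomial (Fin 2) R) (MvPolynomial (Fin 2) R)}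
    (hD : divergence D = 0) : ∃ p, D = jacobian p := by
  rw [divergence, Fin.sum_univ_two] at hD
  obtain ⟨q, hq⟩ :=
    (isLocallyNilpotent_pderiv (R := R) (0 : Fin 2)).surjective_of_slice (pderiv_X_self 0) (D (X 1))
  have hrest : -D (X 0) - pderiv 1 q ∈ kernel (pderiv 0) := by
    rw [mem_kernel, map_sub, map_neg, pderiv_comm, hq, ← neg_add', hD, neg_zero]
  obtain ⟨t, ht0, ht1⟩ := exists_primitive (pderiv_X_self 1) (kernel (pderiv 0))
    (by simp [mem_kernel])
    (fun x hx => by rw [mem_kernel, pderiv_comm, mem_kernel.mp hx, map_zero])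
    (isLocallyNilpotent_pderiv (1 : Fin 2)) hrest
  refine ⟨q + t, derivation_ext fun i => ?_⟩
  fin_cases i
  · change D (X 0) = jacobian (q + t) (X 0)
    rw [jacobian_X_zero, map_add, ht1]
    ring
  · change D (X 1) = jacobian (q + t) (X 1)
    rw [jacobian_X_one, map_add, hq, mem_kernel.mp ht0, add_zero]

end Plane

section Reduced

open MvPolynomial

variable {R : Type*} [CommRing R] [IsReduced R]
  {D : Derivation R (MvPolynomial (Fin 2) R) (MvPolynomial (Fin 2) R)}
  {p f s : MvPolynomial (Fin 2) R}

theorem Straightens.exists_jacobian_eq_C_smul (h : Straightens D f s) :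
    ∃ c : R, IsUnit c ∧ jacobian f = (C c : MvPolynomial (Fin 2) R) • D := by
  obtain ⟨c, hc, hfs⟩ := isUnit_iff_eq_C_of_isReduced.mp
    (isUnit_jacobian_of_adjoin_eq_top h.adjoin_eq_top)
  exact ⟨c, hc, hfs ▸ h.jacobian_eq_smul⟩

theorem Straightens.divergence_eq_zero (h : Straightens D f s) : divergence D = 0 := by
  obtain ⟨c, hc, hfD⟩ := h.exists_jacobian_eq_C_smul
  have hdiv := divergence_jacobian f
  rw [hfD, divergence_C_smul] at hdiv
  exact (hc.map C).mul_right_eq_zero.mp hdiv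

theorem Straightens.kernel_jacobian_eq [Algebra ℚ R] (h : Straightens (jacobian p) f s) :
    kernel (jacobian p) = Algebra.adjoin R {p} := by
  have hp : p ∈ kernel (jacobian p) := jacobian_self p
  refine le_antisymm ?_ (Algebra.adjoin_le (Set.singleton_subset_iff.mpr hp))
  obtain ⟨c, -, hfp⟩ := h.exists_jacobian_eq_C_smul
  have ha : f - C c * p ∈ kernel (jacobian p) :=
    sub_mem h.map_constant (mul_mem ((kernel (jacobian p)).algebraMap_mem c) hp)
  rw [h.kernel_eq, Algebra.adjoin_singleton_eq_range_aeval] at ha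
  obtain ⟨q, hq : Polynomial.aeval f q = f - C c * p⟩ := ha
  have hjac : jacobian s (f - C c * p) = 0 := by
    rw [map_sub, jacobian_antisymm, hfp, ← algebraMap_eq, ← Algebra.smul_def, Derivation.map_smul,
      jacobian_antisymm s p, Derivation.smul_apply, smul_neg, algebraMap_smul, sub_neg_eq_add,
      neg_add_cancel]
  have hder : Polynomial.derivative q = 0 := by
    apply (injective_iff_map_eq_zero _).mp h.aeval_injective
    rw [← hq, Derivation.map_aeval, smul_eq_mul, jacobian_antisymm, mul_neg, neg_eq_zero] at hjac
    exact (isUnit_jacobian_of_adjoin_eq_top h.adjoin_eq_top).mul_left_eq_zero.mp hjac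
  have := IsAddTorsionFree.of_module_rat R
  rw [Polynomial.eq_C_of_derivative_eq_zero hder, Polynomial.aeval_C, eq_sub_iff_add_eq'] at hq
  rw [h.kernel_eq, Algebra.adjoin_le_iff, Set.singleton_subset_iff, ← hq]
  exact add_mem (mul_mem (Subalgebra.algebraMap_mem _ c) (Algebra.self_mem_adjoin_singleton R p))
    (Subalgebra.algebraMap_mem _ _)

end Reduced

section AlgebraicallyClosed

open MvPolynomial

variable {k : Type*} [Field k]

theorem trdeg_quotient_le {n : ℕ} (I : Ideal (MvPolynomial (Fin (n + 1)) k)) [I.IsPrime]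
    (hI : I ≠ ⊥) : Algebra.trdeg k (MvPolynomial (Fin (n + 1)) k ⧸ I) ≤ n := by
  by_contra! hlt
  let x : Fin (n + 1) → MvPolynomial (Fin (n + 1)) k ⧸ I := fun i => Ideal.Quotient.mk I (X i)
  have hx : aeval x = Ideal.Quotient.mkₐ k I := algHom_ext fun i => aeval_X x i
  have htop : Algebra.adjoin k (Set.range x) = ⊤ := by
    rw [Algebra.adjoin_range_eq_range_aeval, hx, AlgHom.range_eq_top]
    exact Ideal.Quotient.mkₐ_surjective k I
  have : Algebra.IsAlgebraic (Algebra.adjoin k (Set.range x)) (MvPolynomial (Fin (n + 1)) k ⧸ I) :=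
    ⟨fun y => isAlgebraic_algebraMap
      (⟨y, htop ▸ Algebra.mem_top⟩ : Algebra.adjoin k (Set.range x))⟩
  have hbasis := Algebra.IsAlgebraic.isTranscendenceBasis_of_lift_le_trdeg_of_finite k x (by
    rw [← Order.succ_le_iff, Cardinal.succ_natCast] at hlt
    simpa using hlt)
  obtain ⟨g, hgI, hg⟩ := I.ne_bot_iff.mp hI
  refine hg ((injective_iff_map_eq_zero _).mp hbasis.1 g ?_)
  rw [hx]
  exact Ideal.Quotient.eq_zero_iff_mem.mpr hgI

theorem isAlgebraic_of_derivation_eq_zero {B : Type*} [CommRing B] [IsDomain B] [CharZero B]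
    [Algebra k B] (htr : Algebra.trdeg k B ≤ 1) {E : Derivation k B B} (hE : E ≠ 0) {b : B}
    (hb : E b = 0) : IsAlgebraic k b := by
  by_contra htrans
  have hindep : AlgebraicIndependent k ![b] := algebraicIndependent_unique_type_iff.mpr htrans
  have hbasis := hindep.isTranscendenceBasis_of_lift_trdeg_le_of_finite (by simpa using htr)
  have hle : Algebra.adjoin k (Set.range ![b]) ≤ kernel E := by
    simpa [Algebra.adjoin_le_iff] using mem_kernel.mpr hb
  refine hE (Derivation.ext fun y => eq_zero_of_isAlgebraic_kernel ?_)
  obtain ⟨P, hP, hPy⟩ := hbasis.isAlgebraic.isAlgebraic y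
  refine ⟨P.map (Subalgebra.inclusion hle).toRingHom, ?_, ?_⟩
  · rwa [Polynomial.map_ne_zero_iff (Subalgebra.inclusion_injective hle)]
  · rw [Polynomial.aeval_def, Polynomial.eval₂_map]
    exact hPy

theorem isUnit_of_totalDegree_eq_zero {σ : Type*} {a : MvPolynomial σ k} (ha : a ≠ 0)
    (h : a.totalDegree = 0) : IsUnit a := by
  rw [totalDegree_eq_zero_iff_eq_C.mp h] at ha ⊢
  exact (IsUnit.mk0 _ (C_ne_zero.mp ha)).map C

variable [CharZero k] {D : Derivation k (MvPolynomial (Fin 2) k) (MvPolynomial (Fin 2) k)}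

/-- `D` induces a nonzero derivation of the curve `g = 0`, whose constants are algebraic. -/
theorem IsFixedPointFree.exists_dvd_sub_C [IsAlgClosed k] (hD : IsFixedPointFree D)
    {g s : MvPolynomial (Fin 2) k} (hg : Prime g) (hDg : D g = 0) (hs : g ∣ D s) :
    ∃ c, g ∣ s - C c := by
  let I := Ideal.span {g}
  have : I.IsPrime := (Ideal.span_singleton_prime hg.ne_zero).mpr hg
  let π := Ideal.Quotient.mkₐ k I
  have hπ (x) : π x = 0 ↔ g ∣ x :=
    Ideal.Quotient.eq_zero_iff_mem.trans Ideal.mem_span_singleton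
  have hstable (x) (hx : π x = 0) : π (D x) = 0 := by
    obtain ⟨y, rfl⟩ := (hπ x).mp hx
    rw [hπ, D.leibniz, hDg, smul_zero, add_zero]
    exact dvd_mul_right g (D y)
  let E := Derivation.liftOfSurjective (Ideal.Quotient.mkₐ_surjective k I) hstable
  have hE (x) : E (π x) = π (D x) :=
    Derivation.liftOfSurjective_apply (Ideal.Quotient.mkₐ_surjective k I) hstable x
  have hE0 : E ≠ 0 := by
    intro h0
    refine Ideal.IsPrime.ne_top ‹I.IsPrime› (top_le_iff.mp (hD.ge.trans (Ideal.span_le.mpr ?_)))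
    rintro _ ⟨x, rfl⟩
    rw [SetLike.mem_coe, ← Ideal.Quotient.eq_zero_iff_mem]
    exact (hE x).symm.trans (by rw [h0, Derivation.zero_apply])
  have : CharZero (MvPolynomial (Fin 2) k ⧸ I) :=
    charZero_of_injective_algebraMap (algebraMap k _).injective
  have htr := trdeg_quotient_le I (by simpa [I] using hg.ne_zero)
  rw [Nat.cast_one] at htr
  have halg : IsAlgebraic k (π s) :=
    isAlgebraic_of_derivation_eq_zero htr hE0 (by rw [hE, hπ]; exact hs)
  obtain ⟨c, hc⟩ := (IsAlgClosed.algebraMap_bijective_of_isIntegral (k := k)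
    (K := integralClosure k (MvPolynomial (Fin 2) k ⧸ I))).surjective ⟨π s, halg.isIntegral⟩
  refine ⟨c, (hπ _).mp ?_⟩
  rw [map_sub, sub_eq_zero]
  exact (congrArg Subtype.val hc).symm

theorem IsLocallyNilpotent.exists_kernel_totalDegree_ne_zero (hD : IsLocallyNilpotent D)
    (hD0 : D ≠ 0) : ∃ f ∈ kernel D, f.totalDegree ≠ 0 := by
  by_contra! hconst
  have hbot : kernel D = Algebra.adjoin k {0} := by
    refine le_antisymm (fun g hg => ?_) (Algebra.adjoin_le (by simp))
    rw [totalDegree_eq_zero_iff_eq_C.mp (hconst g hg)]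
    exact Subalgebra.algebraMap_mem _ _
  obtain ⟨r, hr, hr'⟩ := hD.exists_local_slice hD0
  obtain ⟨c, hc⟩ : ∃ c, D r = C c := ⟨_, totalDegree_eq_zero_iff_eq_C.mp (hconst _ hr')⟩
  have hc0 : c ≠ 0 := by rintro rfl; simp [hc] at hr
  have hslice : D (c⁻¹ • r) = 1 := by
    rw [D.map_smul, hc, smul_eq_C_mul, ← C_mul, inv_mul_cancel₀ hc0, C_1]
  have hunit := isUnit_jacobian_of_adjoin_eq_top (hD.straightens hslice hbot).adjoin_eq_top
  simp [jacobian_apply] at hunit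

theorem IsLocallyNilpotent.irreducible_of_minimal (hD : IsLocallyNilpotent D)
    {f : MvPolynomial (Fin 2) k} (hf : f ∈ kernel D) (hf0 : f.totalDegree ≠ 0)
    (hmin : ∀ g ∈ kernel D, g.totalDegree < f.totalDegree → g.totalDegree = 0) :
    Irreducible f := by
  refine ⟨fun hu => hf0 (isUnit_iff_totalDegree_of_isReduced.mp hu).2, ?_⟩
  rintro a b rfl
  have hab : a * b ≠ 0 := by rintro h; simp [h] at hf0
  have ha0 := left_ne_zero_of_mul hab
  have hb0 := right_ne_zero_of_mul hab
  have ha : a ∈ kernel D := hD.eq_zero_of_mul hab hf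
  have hb : b ∈ kernel D := hD.eq_zero_of_mul (mul_comm a b ▸ hab) (mul_comm a b ▸ hf)
  rw [totalDegree_mul_of_isDomain ha0 hb0] at hmin
  by_cases h : a.totalDegree = 0
  · exact .inl (isUnit_of_totalDegree_eq_zero ha0 h)
  · exact .inr (isUnit_of_totalDegree_eq_zero hb0 (hmin b hb (by omega)))

theorem IsLocallyNilpotent.exists_forall_prime_sub_C (hD : IsLocallyNilpotent D) (hD0 : D ≠ 0) :
    ∃ f ∈ kernel D, ∀ c, Prime (f - C c) := by
  obtain ⟨f, ⟨hf, hf0⟩, hmin⟩ := WellFounded.has_min (measure totalDegree).wf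
    {f | f ∈ kernel D ∧ totalDegree f ≠ 0} (hD.exists_kernel_totalDegree_ne_zero hD0)
  refine ⟨f, hf, fun c => Irreducible.prime ?_⟩
  refine hD.irreducible_of_minimal (sub_mem hf ((kernel D).algebraMap_mem c)) (fun h => ?_)
    fun g hg hlt => ?_
  · rw [totalDegree_eq_zero_iff_eq_C, sub_eq_iff_eq_add, ← C_add] at h
    rw [h, totalDegree_C] at hf0
    exact hf0 rfl
  · by_contra hg0
    exact hmin g ⟨hg, hg0⟩ (hlt.trans_le (totalDegree_sub_C_le f c))

variable {f : MvPolynomial (Fin 2) k}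

theorem kernel_eq_adjoin [IsAlgClosed k] (hD : IsLocallyNilpotent D)
    (hfpf : IsFixedPointFree D) (hf : f ∈ kernel D) (hprime : Prime f) :
    kernel D = Algebra.adjoin k {f} := by
  refine le_antisymm (fun g hg => ?_) (Algebra.adjoin_le (Set.singleton_subset_iff.mpr hf))
  induction hn : g.totalDegree using Nat.strong_induction_on generalizing g with
  | _ n ih =>
    obtain ⟨c, h, hgh⟩ := hfpf.exists_dvd_sub_C hprime hf (hg ▸ dvd_zero f : f ∣ D g)
    obtain rfl : g = f * h + C c := sub_eq_iff_eq_add.mp hgh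
    refine add_mem (mul_mem (Algebra.self_mem_adjoin_singleton k f) ?_)
      (Subalgebra.algebraMap_mem _ c)
    by_cases h0 : h = 0
    · exact h0 ▸ zero_mem _
    have hfh : D (h * f) = 0 := by
      rw [mul_comm, ← hgh]
      exact sub_mem hg ((kernel D).algebraMap_mem c)
    refine ih _ ?_ h (hD.eq_zero_of_mul (mul_ne_zero h0 hprime.ne_zero) hfh) rfl
    have hdeg := totalDegree_sub_C_le (f * h + C c) c
    rw [add_sub_cancel_right, totalDegree_mul_of_isDomain hprime.ne_zero h0, hn] at hdeg
    have hf0 : f.totalDegree ≠ 0 := fun h0 =>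
      hprime.not_isUnit (isUnit_of_totalDegree_eq_zero hprime.ne_zero h0)
    omega

theorem exists_slice_of_eq_aeval [IsAlgClosed k] (hfpf : IsFixedPointFree D) (hf : f ∈ kernel D)
    (hprime : ∀ c, Prime (f - C c)) (q : k[X]) (hq : q ≠ 0) (r : MvPolynomial (Fin 2) k)
    (hr : D r = Polynomial.aeval f q) : ∃ s, D s = 1 := by
  induction hn : q.natDegree generalizing q r with
  | zero =>
    obtain ⟨c, rfl⟩ := Polynomial.natDegree_eq_zero.mp hn
    refine ⟨c⁻¹ • r, ?_⟩
    rw [D.map_smul, hr, Polynomial.aeval_C, algebraMap_eq, smul_eq_C_mul, ← C_mul,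
      inv_mul_cancel₀ (by simpa using hq), C_1]
  | succ n ih =>
    obtain ⟨a, ha⟩ := IsAlgClosed.exists_root q
      (Polynomial.degree_ne_of_natDegree_ne (by rw [hn]; exact n.succ_ne_zero))
    obtain ⟨q', rfl⟩ := Polynomial.dvd_iff_isRoot.mpr ha
    have hq' : q' ≠ 0 := right_ne_zero_of_mul hq
    rw [map_mul, map_sub, Polynomial.aeval_X, Polynomial.aeval_C, algebraMap_eq] at hr
    have hfa : D (f - C a) = 0 := sub_mem hf ((kernel D).algebraMap_mem a)
    obtain ⟨c, r', hr'⟩ := hfpf.exists_dvd_sub_C (hprime a) hfa (hr ▸ dvd_mul_right _ _)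
    refine ih q' hq' r' ?_ ?_
    · apply mul_left_cancel₀ (hprime a).ne_zero
      rw [← hr, sub_eq_iff_eq_add.mp hr', map_add, D.leibniz, hfa, derivation_C, smul_zero,
        add_zero, add_zero, smul_eq_mul]
    · rw [Polynomial.natDegree_mul (Polynomial.X_sub_C_ne_zero a) hq', Polynomial.natDegree_X_sub_C]
        at hn
      omega

theorem exists_straightens_of_isAlgClosed [IsAlgClosed k] (hD : IsLocallyNilpotent D)
    (hfpf : IsFixedPointFree D) : ∃ f s, Straightens D f s := by
  obtain ⟨f, hf, hprime⟩ := hD.exists_forall_prime_sub_C hfpf.ne_zero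
  have hker := kernel_eq_adjoin hD hfpf hf (by simpa using hprime 0)
  obtain ⟨r, hr, hr'⟩ := hD.exists_local_slice hfpf.ne_zero
  have hDr : D r ∈ kernel D := hr'
  rw [hker, Algebra.adjoin_singleton_eq_range_aeval] at hDr
  obtain ⟨q, hq : Polynomial.aeval f q = D r⟩ := hDr
  obtain ⟨s, hs⟩ := exists_slice_of_eq_aeval hfpf hf hprime q
    (by rintro rfl; exact hr (hq ▸ map_zero _)) r hq.symm
  exact ⟨f, s, hD.straightens hs hker⟩

end AlgebraicallyClosed

section Devissage

open scoped TensorProduct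

variable {R K L M N : Type*} [CommRing R] [AddCommGroup K] [AddCommGroup L] [AddCommGroup M]
  [AddCommGroup N] [Module R K] [Module R L] [Module R M] [Module R N]

theorem mem_torsionOf_smul_top [Module.Flat R M] {n : N} {m : M} (h : n ⊗ₜ[R] m = 0) :
    m ∈ Ideal.torsionOf R N n • (⊤ : Submodule R M) := by
  let ι : R ⧸ Ideal.torsionOf R N n →ₗ[R] N :=
    (R ∙ n).subtype ∘ₗ (Ideal.quotTorsionOfEquivSpanSingleton R N n).toLinearMap
  have hι : ι (Ideal.Quotient.mk _ 1) = n :=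
    (congrArg Subtype.val (Ideal.quotTorsionOfEquivSpanSingleton_apply_mk n 1)).trans (one_smul R n)
  have hinj := Module.Flat.rTensor_preserves_injective_linearMap (M := M) ι
    ((R ∙ n).injective_subtype.comp (LinearEquiv.injective _))
  have h1 : Ideal.Quotient.mk (Ideal.torsionOf R N n) 1 ⊗ₜ[R] m = 0 := by
    apply hinj
    rw [map_zero, LinearMap.rTensor_tmul, hι, h]
  simpa using (TensorProduct.quotTensorEquivQuotSMul_mk_tmul _ 1 m).symm.trans
    ((congrArg _ h1).trans (map_zero _))

theorem mem_colon_smul_top_of_smul_mem [Module.Flat R M] {I : Ideal R} {a : R} {m : M}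
    (h : a • m ∈ I • (⊤ : Submodule R M)) :
    m ∈ Submodule.colon I {a} • (⊤ : Submodule R M) := by
  have htors : Ideal.torsionOf R (R ⧸ I) (Ideal.Quotient.mk I a) = Submodule.colon I {a} := by
    ext r
    rw [Ideal.mem_torsionOf_iff, Submodule.mem_colon_singleton, ← Ideal.Quotient.eq_zero_iff_mem,
      smul_eq_mul, map_mul, Algebra.smul_def, Ideal.Quotient.algebraMap_eq]
  rw [← htors]
  apply mem_torsionOf_smul_top
  apply (TensorProduct.quotTensorEquivQuotSMul M I).injective
  rwa [map_zero, TensorProduct.quotTensorEquivQuotSMul_mk_tmul, Submodule.Quotient.mk_eq_zero]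

theorem smul_mem_smul_top_of_mem_colon {I : Ideal R} {a : R} {m : M}
    (h : m ∈ Submodule.colon I {a} • (⊤ : Submodule R M)) : a • m ∈ I • (⊤ : Submodule R M) := by
  refine Submodule.smul_induction_on h (fun r hr x _ => ?_) fun x y hx hy => ?_
  · rw [smul_smul, mul_comm]
    exact Submodule.smul_mem_smul (Submodule.mem_colon_singleton.mp hr) Submodule.mem_top
  · rw [smul_add]
    exact add_mem hx hy

theorem mem_sup_span_singleton_smul_top {I : Ideal R} {a : R} {m : M} :
    m ∈ (I ⊔ Ideal.span {a}) • (⊤ : Submodule R M) ↔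
      ∃ m', m - a • m' ∈ I • (⊤ : Submodule R M) := by
  rw [Submodule.sup_smul, Submodule.mem_sup', Submodule.ideal_span_singleton_smul]
  constructor
  · rintro ⟨⟨i, hi⟩, ⟨_, h⟩, rfl⟩
    obtain ⟨m', -, rfl⟩ := (Submodule.mem_smul_pointwise_iff_exists _ _ _).mp h
    exact ⟨m', by simpa using hi⟩
  · rintro ⟨m', h⟩
    exact ⟨⟨_, h⟩, ⟨_, Submodule.smul_mem_pointwise_smul m' a ⊤ trivial⟩, sub_add_cancel _ _⟩

theorem map_mem_smul_top (f : M →ₗ[R] N) {I : Ideal R} {m : M}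
    (h : m ∈ I • (⊤ : Submodule R M)) : f m ∈ I • (⊤ : Submodule R N) :=
  Submodule.smul_top_le_comap_smul_top I f h

/-- Exactness of the reduction `L/IL → M/IM → N/IN`, stated on representatives. -/
def ExactModulo (I : Ideal R) (α : L →ₗ[R] M) (β : M →ₗ[R] N) : Prop :=
  ∀ y, β y ∈ I • (⊤ : Submodule R N) → ∃ x, y - α x ∈ I • (⊤ : Submodule R M)

variable {γ : K →ₗ[R] L} {α : L →ₗ[R] M} {β : M →ₗ[R] N}

theorem ExactModulo.of_sup_of_colon [Module.Flat R N] (hβα : β ∘ₗ α = 0) {I : Ideal R} {a : R}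
    (hsup : ExactModulo (I ⊔ Ideal.span {a}) α β)
    (hcolon : ExactModulo (Submodule.colon I {a}) α β) :
    ExactModulo I α β := by
  intro y hy
  have hβα' (x : L) : β (α x) = 0 := LinearMap.congr_fun hβα x
  obtain ⟨x, hx⟩ := hsup y (Submodule.smul_mono_left le_sup_left hy)
  obtain ⟨y', hy'⟩ := mem_sup_span_singleton_smul_top.mp hx
  have hβy' : a • β y' ∈ I • (⊤ : Submodule R N) := by
    have h := sub_mem hy (map_mem_smul_top β hy')
    simpa only [map_sub, map_smul, hβα', sub_zero, sub_sub_cancel] using h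
  obtain ⟨x', hx'⟩ := hcolon y' (mem_colon_smul_top_of_smul_mem hβy')
  refine ⟨x + a • x', ?_⟩
  have h := add_mem hy' (smul_mem_smul_top_of_mem_colon hx')
  rw [map_add, map_smul]
  convert h using 1
  rw [smul_sub]
  abel

theorem one_tmul_residueField_eq_zero_iff [Module.Flat R M] {P : Ideal R} [P.IsPrime] {m : M} :
    (1 : P.ResidueField) ⊗ₜ[R] m = 0 ↔ m ∈ P • (⊤ : Submodule R M) := by
  constructor
  · intro h
    convert mem_torsionOf_smul_top h using 2
    ext r
    rw [Ideal.mem_torsionOf_iff, ← Algebra.algebraMap_eq_smul_one,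
      Ideal.algebraMap_residueField_eq_zero]
  · intro h
    refine Submodule.smul_induction_on h (fun r hr x _ => ?_) fun x y hx hy => ?_
    · rw [← TensorProduct.smul_tmul, ← Algebra.algebraMap_eq_smul_one,
        Ideal.algebraMap_residueField_eq_zero.mpr hr, TensorProduct.zero_tmul]
    · rw [TensorProduct.tmul_add, hx, hy, add_zero]

theorem exists_smul_eq_one_tmul {P : Ideal R} [P.IsPrime] (ξ : P.ResidueField ⊗[R] M) :
    ∃ d ∉ P, ∃ m : M, d • ξ = 1 ⊗ₜ[R] m := by
  induction ξ with
  | zero => exact ⟨1, P.one_notMem, 0, by simp⟩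
  | tmul c m =>
    obtain ⟨⟨n, d⟩, h⟩ := IsLocalization.surj (nonZeroDivisors (R ⧸ P)) c
    obtain ⟨n, rfl⟩ := Ideal.Quotient.mk_surjective n
    obtain ⟨d', hd'⟩ := Ideal.Quotient.mk_surjective d.1
    refine ⟨d', fun h0 => nonZeroDivisors.ne_zero d.2 ?_, n • m, ?_⟩
    · rw [← hd', Ideal.Quotient.eq_zero_iff_mem.mpr h0]
    · rw [← TensorProduct.smul_tmul, TensorProduct.smul_tmul', ← Algebra.algebraMap_eq_smul_one,
        Algebra.smul_def, mul_comm]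
      rw [← hd'] at h
      exact congrArg (· ⊗ₜ[R] m) h
  | add x y hx hy =>
    obtain ⟨d, hd, m, hm⟩ := hx
    obtain ⟨e, he, n, hn⟩ := hy
    refine ⟨d * e, fun h => (‹P.IsPrime›.mem_or_mem h).elim hd he, e • m + d • n, ?_⟩
    rw [smul_add, TensorProduct.tmul_add, TensorProduct.tmul_smul, TensorProduct.tmul_smul, ← hm,
      ← hn, mul_smul, mul_smul, smul_comm]

theorem ExactModulo.of_isPrime [Module.Flat R M] [Module.Flat R N] {P : Ideal R} [hP : P.IsPrime]
    (hfiber : Function.Exact (α.lTensor P.ResidueField) (β.lTensor P.ResidueField))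
    (hleft : ∀ d ∉ P, ExactModulo (P ⊔ Ideal.span {d}) γ α) (hαγ : α ∘ₗ γ = 0) :
    ExactModulo P α β := by
  intro y hy
  have hαγ' (x : K) : α (γ x) = 0 := LinearMap.congr_fun hαγ x
  rw [← one_tmul_residueField_eq_zero_iff, ← LinearMap.lTensor_tmul] at hy
  obtain ⟨ξ, hξ⟩ := (hfiber _).mp hy
  obtain ⟨d, hd, x, hx⟩ := exists_smul_eq_one_tmul ξ
  have hdy : d • y - α x ∈ P • (⊤ : Submodule R M) := by
    rw [← one_tmul_residueField_eq_zero_iff, TensorProduct.tmul_sub, TensorProduct.tmul_smul, ← hξ,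
      ← map_smul, hx, LinearMap.lTensor_tmul, sub_self]
  -- The numerator `x` is divisible by `d` modulo `P` and a cycle, so `d` cancels.
  obtain ⟨z, hz⟩ := hleft d hd x <| mem_sup_span_singleton_smul_top.mpr
    ⟨y, by simpa only [neg_sub] using neg_mem hdy⟩
  obtain ⟨x', hx'⟩ := mem_sup_span_singleton_smul_top.mp hz
  refine ⟨x', ?_⟩
  have hdy' : d • (y - α x') ∈ P • (⊤ : Submodule R M) := by
    have h := add_mem hdy (map_mem_smul_top α hx')
    simpa only [map_sub, map_smul, hαγ', sub_zero, smul_sub, sub_add_sub_cancel] using h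
  refine Submodule.smul_mono_left (fun r hr => ?_) (mem_colon_smul_top_of_smul_mem hdy')
  exact (hP.mem_or_mem (Submodule.mem_colon_singleton.mp hr)).resolve_right hd

theorem exactModulo_of_residueField [IsNoetherianRing R] [Module.Flat R M] [Module.Flat R N]
    (hβα : β ∘ₗ α = 0) (hαγ : α ∘ₗ γ = 0) (hleft : ∀ I, ExactModulo I γ α)
    (hfiber : ∀ (P : Ideal R) [P.IsPrime],
      Function.Exact (α.lTensor P.ResidueField) (β.lTensor P.ResidueField)) (I : Ideal R) :
    ExactModulo I α β := by
  induction I using WellFoundedGT.induction with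
  | _ I ih =>
    by_cases hI : I = ⊤
    · exact fun y _ => ⟨0, by simp [hI]⟩
    by_cases hprime : I.IsPrime
    · exact .of_isPrime (hfiber I) (fun d _ => hleft _) hαγ
    obtain ⟨a, b, hab, ha, hb⟩ : ∃ a b, a * b ∈ I ∧ a ∉ I ∧ b ∉ I := by
      by_contra! h
      exact hprime ⟨hI, fun {a b} hab => or_iff_not_imp_left.mpr (h a b hab)⟩
    refine .of_sup_of_colon hβα (a := a) (ih _ ?_) (ih _ ?_)
    · exact left_lt_sup.mpr fun h => ha (h (Ideal.mem_span_singleton_self a))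
    · refine SetLike.lt_iff_le_and_exists.mpr ⟨fun r hr => ?_, b, ?_, hb⟩
      · exact Submodule.mem_colon_singleton.mpr (I.mul_mem_right a hr)
      · exact Submodule.mem_colon_singleton.mpr (by rwa [smul_eq_mul, mul_comm])

theorem exactModulo_bot : ExactModulo ⊥ α β ↔ ∀ y, β y = 0 → ∃ x, α x = y := by
  simp only [ExactModulo, Submodule.bot_smul, Submodule.mem_bot, sub_eq_zero, @eq_comm _ (α _)]

/-- Exactness of `0 → L → M → N → 0`. -/
def IsShortExact {L M N : Type*} [Zero N] (α : L → M) (β : M → N) : Prop :=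
  Function.Injective α ∧ Function.Exact α β ∧ Function.Surjective β

theorem isShortExact_iff_of_ladder {L' M' N' : Type*} [AddCommGroup L'] [AddCommGroup M']
    [AddCommGroup N'] [Module R L'] [Module R M'] [Module R N'] {α' : L' →ₗ[R] M'}
    {β' : M' →ₗ[R] N'} (e₁ : L ≃ₗ[R] L') (e₂ : M ≃ₗ[R] M') (e₃ : N ≃ₗ[R] N')
    (h₁₂ : α' ∘ₗ e₁ = e₂ ∘ₗ α) (h₂₃ : β' ∘ₗ e₂ = e₃ ∘ₗ β) :
    IsShortExact α' β' ↔ IsShortExact α β := by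
  have h₁₂' : α' ∘ e₁ = e₂ ∘ α := congrArg DFunLike.coe h₁₂
  have h₂₃' : β' ∘ e₂ = e₃ ∘ β := congrArg DFunLike.coe h₂₃
  rw [IsShortExact, IsShortExact, ← EquivLike.injective_comp e₁, h₁₂',
    EquivLike.comp_injective, ← EquivLike.surjective_comp e₂, h₂₃', EquivLike.comp_surjective,
    Function.Exact.iff_of_ladder_linearEquiv h₁₂ h₂₃]

theorem isShortExact_of_residueField [IsNoetherianRing R] [Module.Flat R L] [Module.Flat R M]
    [Module.Flat R N] (hβα : β ∘ₗ α = 0)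
    (hfiber : ∀ (P : Ideal R) [P.IsPrime],
      IsShortExact (α.lTensor P.ResidueField) (β.lTensor P.ResidueField)) :
    IsShortExact α β := by
  have hL : ∀ I, ExactModulo I (0 : PUnit →ₗ[R] L) α :=
    exactModulo_of_residueField (γ := (0 : PUnit →ₗ[R] PUnit)) (LinearMap.comp_zero α)
      (LinearMap.comp_zero _) (fun I y _ => ⟨0, zero_mem _⟩) fun P _ => by
        rw [LinearMap.lTensor_zero]
        exact (LinearMap.exact_zero_iff_injective _ _).mpr (hfiber P).1
  have hM : ∀ I, ExactModulo I α β :=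
    exactModulo_of_residueField hβα (LinearMap.comp_zero α) hL fun P _ => (hfiber P).2.1
  have hN : ∀ I, ExactModulo I β (0 : N →ₗ[R] PUnit) :=
    exactModulo_of_residueField (LinearMap.zero_comp β) hβα hM fun P _ => by
      rw [LinearMap.lTensor_zero]
      exact (LinearMap.exact_zero_iff_surjective _ _).mpr (hfiber P).2.2
  refine ⟨(injective_iff_map_eq_zero α).mpr fun x hx => ?_,
    fun y => ⟨exactModulo_bot.mp (hM ⊥) y, ?_⟩, fun z => exactModulo_bot.mp (hN ⊥) z rfl⟩
  · obtain ⟨u, rfl⟩ := exactModulo_bot.mp (hL ⊥) x hx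
    rfl
  · rintro ⟨x, rfl⟩
    exact LinearMap.congr_fun hβα x

theorem isShortExact_lTensor_iff (F : Type*) [AddCommGroup F] [Module R F]
    [Module.FaithfullyFlat R F] :
    IsShortExact (α.lTensor F) (β.lTensor F) ↔ IsShortExact α β := by
  rw [IsShortExact, IsShortExact, Module.FaithfullyFlat.lTensor_injective_iff_injective,
    Module.FaithfullyFlat.lTensor_surjective_iff_surjective,
    Module.FaithfullyFlat.lTensor_exact_iff_exact]

end Devissage

section Jacobian

open MvPolynomial

variable {R : Type*} [CommRing R] {p s : MvPolynomial (Fin 2) R}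

/-- Exactness of `0 → R[T] → R[X, Y] → R[X, Y] → 0`, the maps being `T ↦ p` and the Jacobian with
`p`. -/
def IsJacobianExact (p : MvPolynomial (Fin 2) R) : Prop :=
  IsShortExact (Polynomial.aeval p : R[X] →ₐ[R] MvPolynomial (Fin 2) R) (jacobian p)

theorem jacobian_aeval_self (p : MvPolynomial (Fin 2) R) (q : R[X]) :
    jacobian p (Polynomial.aeval p q) = 0 := by
  rw [Derivation.map_aeval, jacobian_self, smul_zero]

theorem isJacobianExact_map_iff (S : Type*) [CommRing S] [Algebra R S] :
    IsJacobianExact (map (algebraMap R S) p) ↔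
      IsShortExact ((Polynomial.aeval p).toLinearMap.lTensor S)
        ((jacobian p : MvPolynomial (Fin 2) R →ₗ[R] MvPolynomial (Fin 2) R).lTensor S) := by
  let e := (algebraTensorAlgEquiv (σ := Fin 2) R S).toLinearEquiv.restrictScalars R
  refine isShortExact_iff_of_ladder (R := R)
    (α' := (Polynomial.aeval (map (algebraMap R S) p)).toLinearMap.restrictScalars R)
    (β' := (jacobian (map (algebraMap R S) p)).toLinearMap.restrictScalars R)
    ((polyEquivTensor' R S).symm.toLinearEquiv.restrictScalars R) e e ?_ ?_
  · refine TensorProduct.ext' fun c q => ?_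
    have hpq : Polynomial.aeval (map (algebraMap R S) p) q =
        map (algebraMap R S) (Polynomial.aeval p q) :=
      Polynomial.aeval_algHom_apply (mapAlgHom (σ := Fin 2) (Algebra.ofId R S)) p q
    simp [e, polyEquivTensor_symm_apply_tmul_eq_smul, algebraTensorAlgEquiv_tmul, hpq]
  · refine TensorProduct.ext' fun c a => ?_
    simp [e, algebraTensorAlgEquiv_tmul, ← baseChange_jacobian, baseChange_map]

theorem Straightens.isJacobianExact [Algebra ℚ R] (hD : IsLocallyNilpotent (jacobian p))
    (h : Straightens (jacobian p) p s) : IsJacobianExact p := by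
  refine ⟨h.aeval_injective, fun a => ?_, hD.surjective_of_slice h.map_slice⟩
  rw [← mem_kernel, h.kernel_eq, Algebra.adjoin_singleton_eq_range_aeval]
  rfl

theorem IsJacobianExact.exists_straightens [Algebra ℚ R] (h : IsJacobianExact p)
    (hD : IsLocallyNilpotent (jacobian p)) : ∃ s, Straightens (jacobian p) p s := by
  obtain ⟨s, hs⟩ := h.2.2 1
  refine ⟨s, hD.straightens hs (SetLike.ext fun a => ?_)⟩
  rw [mem_kernel, h.2.1 a, Algebra.adjoin_singleton_eq_range_aeval]
  rfl

theorem isJacobianExact_of_field {k : Type*} [Field k] [CharZero k]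
    {p : MvPolynomial (Fin 2) k} (hD : IsLocallyNilpotent (jacobian p))
    (hfpf : IsFixedPointFree (jacobian p)) : IsJacobianExact p := by
  have hD' := hD.baseChange (AlgebraicClosure k)
  have hfpf' := hfpf.baseChange (AlgebraicClosure k)
  rw [baseChange_jacobian] at hD' hfpf'
  obtain ⟨f, s, h⟩ := exists_straightens_of_isAlgClosed hD' hfpf'
  have hp := (hD'.straightens h.map_slice h.kernel_jacobian_eq).isJacobianExact hD'
  exact (isShortExact_lTensor_iff _).mp ((isJacobianExact_map_iff _).mp hp)

theorem exists_straightens_jacobian [IsNoetherianRing R] [Algebra ℚ R]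
    (hD : IsLocallyNilpotent (jacobian p)) (hfpf : IsFixedPointFree (jacobian p)) :
    ∃ s, Straightens (jacobian p) p s := by
  refine IsJacobianExact.exists_straightens ?_ hD
  refine isShortExact_of_residueField (α := (Polynomial.aeval p).toLinearMap)
    (β := (jacobian p).toLinearMap) (LinearMap.ext (jacobian_aeval_self p)) fun P _ => ?_
  have : CharZero P.ResidueField := algebraRat.charZero _
  have hD' := hD.baseChange P.ResidueField
  have hfpf' := hfpf.baseChange P.ResidueField
  rw [baseChange_jacobian] at hD' hfpf'
  exact (isJacobianExact_map_iff _).mp (isJacobianExact_of_field hD' hfpf')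

theorem divergence_eq_zero [IsReduced R] [Algebra ℚ R]
    {D : Derivation R (MvPolynomial (Fin 2) R) (MvPolynomial (Fin 2) R)}
    (hD : IsLocallyNilpotent D) (hfpf : IsFixedPointFree D) : divergence D = 0 := by
  ext m
  refine (nilpotent_iff_mem_prime.mpr fun P hP => ?_).eq_zero
  have : CharZero P.ResidueField := algebraRat.charZero _
  let k := AlgebraicClosure P.ResidueField
  obtain ⟨f, s, h⟩ := exists_straightens_of_isAlgClosed (hD.baseChange k) (hfpf.baseChange k)
  have hm := congrArg (coeff m) ((divergence_baseChange k D).symm.trans h.divergence_eq_zero)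
  rwa [coeff_map, coeff_zero, IsScalarTower.algebraMap_apply R P.ResidueField k, map_eq_zero,
    Ideal.algebraMap_residueField_eq_zero] at hm

end Jacobian

section NilpotentLifting

open MvPolynomial

variable {R : Type*} [CommRing R] {I : Ideal R}

theorem eq_top_of_sup_smul_top_of_isNilpotent {M : Type*} [AddCommGroup M] [Module R M]
    {N : Submodule R M} (hI : IsNilpotent I) (h : N ⊔ I • ⊤ = ⊤) : N = ⊤ := by
  obtain ⟨n, hn⟩ := hI
  have hpow (n : ℕ) : N ⊔ I ^ n • ⊤ = ⊤ := by
    induction n with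
    | zero => rw [pow_zero, Submodule.one_smul, sup_top_eq]
    | succ n ih =>
      have hn : I ^ n • (⊤ : Submodule R M) = I ^ n • N ⊔ I ^ (n + 1) • ⊤ := by
        rw [pow_succ, Submodule.mul_smul, ← Submodule.smul_sup, h]
      refine top_le_iff.mp (ih.ge.trans (sup_le le_sup_left ?_))
      exact hn.le.trans (sup_le_sup_right Submodule.smul_le_right _)
  simpa [hn] using hpow n

variable {σ : Type*} {D : Derivation R (MvPolynomial σ R) (MvPolynomial σ R)}

theorem map_quotient_eq_zero_iff {a : MvPolynomial σ R} :
    map (algebraMap R (R ⧸ I)) a = 0 ↔ a ∈ I • (⊤ : Submodule R (MvPolynomial σ R)) := by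
  rw [← RingHom.mem_ker, ker_map, Ideal.smul_top_eq_map, Ideal.Quotient.algebraMap_eq,
    Ideal.mk_ker]
  rfl

theorem exists_map_eq_of_mem_adjoin {f s : MvPolynomial σ R} {b : MvPolynomial σ (R ⧸ I)}
    (hb : b ∈ Algebra.adjoin (R ⧸ I)
      {map (algebraMap R (R ⧸ I)) f, map (algebraMap R (R ⧸ I)) s}) :
    ∃ a ∈ Algebra.adjoin R {f, s}, map (algebraMap R (R ⧸ I)) a = b := by
  induction hb using Algebra.adjoin_induction with
  | mem b hb =>
    obtain rfl | rfl := hb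
    exacts [⟨f, Algebra.subset_adjoin (Set.mem_insert _ _), rfl⟩,
      ⟨s, Algebra.subset_adjoin (Set.mem_insert_of_mem _ rfl), rfl⟩]
  | algebraMap c =>
    obtain ⟨r, rfl⟩ := Ideal.Quotient.mk_surjective c
    exact ⟨C r, Subalgebra.algebraMap_mem _ r, map_C _ _⟩
  | add b c _ _ hb hc =>
    obtain ⟨x, hx, rfl⟩ := hb
    obtain ⟨y, hy, rfl⟩ := hc
    exact ⟨x + y, add_mem hx hy, map_add _ _ _⟩
  | mul b c _ _ hb hc =>
    obtain ⟨x, hx, rfl⟩ := hb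
    obtain ⟨y, hy, rfl⟩ := hc
    exact ⟨x * y, mul_mem hx hy, map_mul _ _ _⟩

theorem surjective_of_baseChange_quotient (hI : IsNilpotent I)
    (h : Function.Surjective (baseChange (R ⧸ I) D)) : Function.Surjective D := by
  refine (LinearMap.range_eq_top (f := (D : MvPolynomial σ R →ₗ[R] MvPolynomial σ R))).mp <|
    eq_top_of_sup_smul_top_of_isNilpotent hI (top_le_iff.mp fun a _ => ?_)
  obtain ⟨b', hb'⟩ := h (map (algebraMap R (R ⧸ I)) a)
  obtain ⟨b, rfl⟩ := map_surjective _ Ideal.Quotient.mk_surjective b'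
  refine Submodule.mem_sup.mpr ⟨D b, ⟨b, rfl⟩, a - D b, ?_, add_sub_cancel _ _⟩
  rw [← map_quotient_eq_zero_iff, map_sub, ← baseChange_map, ← hb']
  exact sub_self _

theorem exists_map_eq_of_baseChange_eq (hD : Function.Surjective D)
    {a' : MvPolynomial σ (R ⧸ I)} {c : MvPolynomial σ R}
    (h : baseChange (R ⧸ I) D a' = map (algebraMap R (R ⧸ I)) c) :
    ∃ a, map (algebraMap R (R ⧸ I)) a = a' ∧ D a = c := by
  obtain ⟨b, rfl⟩ := map_surjective _ Ideal.Quotient.mk_surjective a'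
  have hb : D b - c ∈ I • (⊤ : Submodule R (MvPolynomial σ R)) := by
    rw [← map_quotient_eq_zero_iff, map_sub, ← baseChange_map, sub_eq_zero]
    exact h
  rw [← (LinearMap.range_eq_top (f := (D : MvPolynomial σ R →ₗ[R] MvPolynomial σ R))).mpr hD,
    LinearMap.range_eq_map, ← Submodule.map_smul''] at hb
  obtain ⟨x, hx, hDx : D x = D b - c⟩ := hb
  refine ⟨b - x, ?_, by rw [map_sub, hDx, sub_sub_cancel]⟩
  rw [map_sub, map_quotient_eq_zero_iff.mpr hx, sub_zero]
  rfl

theorem adjoin_pair_eq_top_of_quotient (hI : IsNilpotent I) {f s : MvPolynomial σ R}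
    (h : Algebra.adjoin (R ⧸ I)
      {map (algebraMap R (R ⧸ I)) f, map (algebraMap R (R ⧸ I)) s} = ⊤) :
    Algebra.adjoin R {f, s} = ⊤ := by
  apply Subalgebra.toSubmodule_injective
  refine (eq_top_of_sup_smul_top_of_isNilpotent hI (top_le_iff.mp fun a _ => ?_)).trans
    Algebra.top_toSubmodule.symm
  obtain ⟨b, hb, hba⟩ := exists_map_eq_of_mem_adjoin
    (h ▸ Algebra.mem_top : map (algebraMap R (R ⧸ I)) a ∈ _)
  refine Submodule.mem_sup.mpr ⟨b, hb, a - b, ?_, add_sub_cancel _ _⟩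
  rw [← map_quotient_eq_zero_iff, map_sub, hba, sub_self]

theorem Straightens.exists_lift_of_isNilpotent [Algebra ℚ R] (hD : IsLocallyNilpotent D)
    (hI : IsNilpotent I) {f' s' : MvPolynomial σ (R ⧸ I)}
    (h : Straightens (LND.baseChange (R ⧸ I) D) f' s') : ∃ f s, Straightens D f s := by
  have hsurj : Function.Surjective D :=
    surjective_of_baseChange_quotient hI ((hD.baseChange (R ⧸ I)).surjective_of_slice h.map_slice)
  obtain ⟨f, rfl, hf⟩ :=
    exists_map_eq_of_baseChange_eq hsurj (h.map_constant.trans (map_zero _).symm)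
  obtain ⟨s, rfl, hs⟩ :=
    exists_map_eq_of_baseChange_eq hsurj (h.map_slice.trans (map_one _).symm)
  exact ⟨f, s, hf, hs, adjoin_pair_eq_top_of_quotient hI h.adjoin_eq_top⟩

end NilpotentLifting

section Descent

open MvPolynomial

variable {R : Type*} [CommRing R] {σ : Type*}
  {D : Derivation R (MvPolynomial σ R) (MvPolynomial σ R)}

theorem exists_subalgebra_fg_mem_range_map (k : Type*) [CommRing k] [Algebra k R] {ι : Type*}
    [Finite ι] (a : ι → MvPolynomial σ R) : ∃ S : Subalgebra k R, S.FG ∧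
      ∀ i, ∃ b : MvPolynomial σ S, map (algebraMap S R) b = a i := by
  classical
  have := Fintype.ofFinite ι
  let T := Finset.univ.biUnion fun i => (a i).coeffs
  refine ⟨Algebra.adjoin k T, Subalgebra.fg_adjoin_finset T, fun i => ?_⟩
  apply mem_range_map_iff_coeffs_subset.mpr
  intro r hr
  exact ⟨⟨r, Algebra.subset_adjoin (Finset.mem_biUnion.mpr ⟨i, Finset.mem_univ i, hr⟩)⟩, rfl⟩

theorem exists_subalgebra_fg_baseChange_eq (k : Type*) [CommRing k] [Algebra k R] [Finite σ]
    (hD : IsLocallyNilpotent D) (hfpf : IsFixedPointFree D) :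
    ∃ (S : Subalgebra k R) (E : Derivation S (MvPolynomial σ S) (MvPolynomial σ S)),
      S.FG ∧ IsLocallyNilpotent E ∧ IsFixedPointFree E ∧ baseChange R E = D := by
  have := Fintype.ofFinite σ
  obtain ⟨c, hc⟩ := isFixedPointFree_iff_exists_sum.mp hfpf
  obtain ⟨S, hS, h⟩ := exists_subalgebra_fg_mem_range_map k (Sum.elim (fun i => D (X i)) c)
  choose d hd using fun i => h (Sum.inl i)
  choose e he using fun i => h (Sum.inr i)
  have hinj := map_injective (σ := σ) (algebraMap S R) Subtype.val_injective
  let E := mkDerivation S d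
  have hE : baseChange R E = D := derivation_ext fun i => by
    rw [baseChange_X, mkDerivation_X, hd, Sum.elim_inl]
  refine ⟨S, E, hS, isLocallyNilpotent_of_X fun i => ?_, ?_, hE⟩
  · obtain ⟨n, hn⟩ := hD (X i)
    refine ⟨n, hinj ?_⟩
    rw [← baseChange_iterate_map, hE, map_X, hn, map_zero]
  · refine isFixedPointFree_iff_exists_sum.mpr ⟨e, hinj ?_⟩
    simp only [E, map_sum, map_mul, mkDerivation_X, hd, he, Sum.elim_inl, Sum.elim_inr, hc,
      map_one]

end Descent

section Main

open MvPolynomial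

variable {R : Type*} [CommRing R] [Algebra ℚ R]
  {D : Derivation R (MvPolynomial (Fin 2) R) (MvPolynomial (Fin 2) R)}

theorem exists_straightens_of_isNoetherianRing [IsNoetherianRing R] (hD : IsLocallyNilpotent D)
    (hfpf : IsFixedPointFree D) : ∃ f s, Straightens D f s := by
  have : IsReduced (R ⧸ nilradical R) :=
    (Ideal.isRadical_iff_quotient_reduced _).mp (Ideal.radical_isRadical _)
  have hD' := hD.baseChange (R ⧸ nilradical R)
  have hfpf' := hfpf.baseChange (R ⧸ nilradical R)
  obtain ⟨p, hp⟩ := exists_eq_jacobian (divergence_eq_zero hD' hfpf')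
  obtain ⟨s, hs⟩ := exists_straightens_jacobian (hp ▸ hD') (hp ▸ hfpf')
  exact (hp ▸ hs).exists_lift_of_isNilpotent hD (IsNoetherianRing.isNilpotent_nilradical R)

theorem exists_straightens (hD : IsLocallyNilpotent D) (hfpf : IsFixedPointFree D) :
    ∃ f s, Straightens D f s := by
  obtain ⟨S, E, hS, hE, hEfpf, rfl⟩ := exists_subalgebra_fg_baseChange_eq ℚ hD hfpf
  have : Algebra.FiniteType ℚ S := S.fg_iff_finiteType.mp hS
  have := Algebra.FiniteType.isNoetherianRing ℚ S
  obtain ⟨f, s, h⟩ := exists_straightens_of_isNoetherianRing hE hEfpf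
  exact ⟨_, _, h.baseChange R⟩

theorem Straightens.bijective_aeval_kernel {f s : MvPolynomial (Fin 2) R} (h : Straightens D f s) :
    Function.Bijective
      (Polynomial.aeval (⟨f, h.map_constant⟩ : kernel D) : R[X] →ₐ[R] kernel D) := by
  let f' : kernel D := ⟨f, h.map_constant⟩
  have hval (q : R[X]) : (Polynomial.aeval f' q).1 = Polynomial.aeval f q :=
    (Polynomial.aeval_algHom_apply (kernel D).val f' q).symm
  constructor
  · intro q q' hqq
    apply h.aeval_injective
    rw [← hval, hqq, hval]
  · rintro ⟨a, ha⟩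
    rw [h.kernel_eq, Algebra.adjoin_singleton_eq_range_aeval] at ha
    obtain ⟨q, hq⟩ := ha
    exact ⟨q, Subtype.ext ((hval q).trans hq)⟩

end Main

end LND

/-- Let `R` be a commutative ring containing `ℚ`, `A = R[X,Y]` and `D` a fixed point free
locally nilpotent `R`-derivation of `A`. Then `Ker D = R^[1]` and `A = (Ker D)^[1]`. -/
theorem fpf_lnd_on_polynomial_ring_two_vars (R : Type*) [CommRing R] [Algebra ℚ R]
    (D : Derivation R (MvPolynomial (Fin 2) R) (MvPolynomial (Fin 2) R))
    (hlnd : ∀ a : MvPolynomial (Fin 2) R, ∃ k : ℕ, (fun b => D b)^[k] a = 0)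
    (hfpf : Ideal.span (Set.range (fun a => D a)) = (⊤ : Ideal (MvPolynomial (Fin 2) R))) :
    ∃ K : Subalgebra R (MvPolynomial (Fin 2) R),
      (∀ a, a ∈ K ↔ D a = 0) ∧
      Nonempty (K ≃ₐ[R] Polynomial R) ∧
      Nonempty (MvPolynomial (Fin 2) R ≃ₐ[K] Polynomial K) := by
  obtain ⟨f, s, h⟩ := LND.exists_straightens hlnd hfpf
  refine ⟨LND.kernel D, fun a => LND.mem_kernel, ⟨.symm ?_⟩, ⟨.symm ?_⟩⟩
  · exact .ofBijective _ h.bijective_aeval_kernel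
  · exact .ofBijective _ (LND.IsLocallyNilpotent.aeval_slice_bijective hlnd h.map_slice)
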